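/- Let Γ be a connected cubic arc-transitive simple graph of finite girth that is isomorphic to none of: the complete graph K_4, the complete bipartite graph K_{3,3}, the cube graph Q_3, the Petersen graph, or the Heawood graph. Then the distinguishing cost of Γ is at most 4. -/

import Mathlib

open SimpleGraph

/-- `x 0, x 1, …, x s` is an `s`-arc of `G`: consecutive vertices are adjacent and
`x i ≠ x (i+2)` whenever both are defined. -/
def IsNArc {V : Type*} (G : SimpleGraph V) (s : ℕ) (x : ℕ → V) : Prop :=
  (∀ i < s, G.Adj (x i) (x (i + 1))) ∧ ∀ i, i + 2 ≤ s → x i ≠ x (i + 2)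

/-- The automorphism group of `G` acts transitively on the `s`-arcs of `G`. -/
def IsNArcTransitive {V : Type*} (G : SimpleGraph V) (s : ℕ) : Prop :=
  ∀ x y : ℕ → V, IsNArc G s x → IsNArc G s y → ∃ φ : G ≃g G, ∀ i ≤ s, φ (x i) = y i
/-- A set of vertices is distinguishing if the identity is the only automorphism of `G`
mapping it onto itself setwise. -/
def IsDistinguishing {V : Type*} (G : SimpleGraph V) (S : Set V) : Prop :=
  ∀ φ : G ≃g G, (⇑φ) '' S = S → ∀ v, φ v = v
/-- The Petersen graph: vertices are the 2-element subsets of a 5-element set,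
two of them adjacent iff they are disjoint. -/
def petersenGraph : SimpleGraph {s : Finset (Fin 5) // s.card = 2} :=
  SimpleGraph.fromRel (fun a b => Disjoint a.1 b.1)
/-- The 3-dimensional cube graph: vertices are the vectors of `{0,1}³`, two adjacent iff
they differ in exactly one coordinate. -/
def cubeGraph : SimpleGraph (Fin 3 → Bool) :=
  SimpleGraph.fromRel (fun x y => (Finset.univ.filter fun i => x i ≠ y i).card = 1)
/-- The Heawood graph: the point–line incidence graph of the Fano plane PG(2,2), whose
points (resp. lines) are the nonzero vectors of `(ZMod 2)³`, the point `p` lying on the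
line `l` iff `p · l = 0`. -/
def heawoodGraph : SimpleGraph (Bool × {v : Fin 3 → ZMod 2 // v ≠ 0}) :=
  SimpleGraph.fromRel (fun p l =>
    p.1 = false ∧ l.1 = true ∧ ∑ i, p.2.1 i * l.2.1 i = 0)

def ArcRel {V : Type*} (G : SimpleGraph V) (n : ℕ) (u v : V) : Prop :=
  ∃ x : ℕ → V, IsNArc G n x ∧ x 0 = u ∧ x n = v

section Arcs
variable {V : Type*} {G : SimpleGraph V}

theorem IsNArc.shift {n m i : ℕ} {x : ℕ → V} (h : IsNArc G n x) (hm : i + m ≤ n) :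
    IsNArc G m (fun t => x (i + t)) := by
  refine ⟨fun t ht => ?_, fun t ht => ?_⟩
  · exact h.1 (i + t) (by omega)
  · exact h.2 (i + t) (by omega)

theorem IsNArc.mono {n m : ℕ} {x : ℕ → V} (h : IsNArc G n x) (hm : m ≤ n) :
    IsNArc G m x :=
  ⟨fun t ht => h.1 t (by omega), fun t ht => h.2 t (by omega)⟩

theorem IsNArc.rev {n : ℕ} {x : ℕ → V} (h : IsNArc G n x) :
    IsNArc G n (fun t => x (n - t)) := by
  refine ⟨fun t ht => ?_, fun t ht => ?_⟩
  · have := h.1 (n - (t + 1)) (by omega)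
    rw [show n - (t + 1) + 1 = n - t by omega] at this
    exact this.symm
  · have := h.2 (n - (t + 2)) (by omega)
    rw [show n - (t + 2) + 2 = n - t by omega] at this
    exact this.symm

theorem IsNArc.map {n : ℕ} {x : ℕ → V} (h : IsNArc G n x) (φ : G ≃g G) :
    IsNArc G n (fun t => φ (x t)) :=
  ⟨fun t ht => φ.map_rel_iff.2 (h.1 t ht), fun t ht e => h.2 t ht (φ.injective e)⟩

theorem IsNArc.snoc {n : ℕ} {x : ℕ → V} (h : IsNArc G n x) {w : V} (hw : G.Adj (x n) w)
    (hne : 1 ≤ n → x (n - 1) ≠ w) :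
    IsNArc G (n + 1) (fun t => if t ≤ n then x t else w) := by
  refine ⟨fun t ht => ?_, fun t ht => ?_⟩
  · by_cases h1 : t + 1 ≤ n
    · simp only [h1, show t ≤ n by omega, if_true]; exact h.1 t (by omega)
    · obtain rfl : t = n := by omega
      simpa using hw
  · by_cases h1 : t + 2 ≤ n
    · simp only [h1, show t ≤ n by omega, if_true]; exact h.2 t h1
    · obtain rfl : n = t + 1 := by omega
      simpa using hne (by omega)

theorem IsNArc.cons {n : ℕ} {x : ℕ → V} (h : IsNArc G n x) {w : V} (hw : G.Adj (x 0) w)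
    (hne : 1 ≤ n → x 1 ≠ w) :
    IsNArc G (n + 1) (fun t => if t = 0 then w else x (t - 1)) := by
  refine ⟨fun t ht => ?_, fun t ht => ?_⟩
  · rcases t with _ | t
    · simpa using hw.symm
    · simpa using h.1 t (by omega)
  · rcases t with _ | t
    · simpa using (hne (by omega)).symm
    · simpa using h.2 t (by omega)

theorem ArcRel.symm {n : ℕ} {u v : V} (h : ArcRel G n u v) : ArcRel G n v u := by
  obtain ⟨x, hx, rfl, rfl⟩ := h
  exact ⟨_, hx.rev, by simp, by simp⟩

theorem ArcRel.map {n : ℕ} {u v : V} (h : ArcRel G n u v) (φ : G ≃g G) :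
    ArcRel G n (φ u) (φ v) := by
  obtain ⟨x, hx, rfl, rfl⟩ := h
  exact ⟨_, hx.map φ, rfl, rfl⟩

theorem ArcRel.of_adj {u v : V} (h : G.Adj u v) : ArcRel G 1 u v := by
  refine ⟨fun t => if t = 0 then u else v, ⟨fun t ht => ?_, fun t ht => by omega⟩, by simp, by simp⟩
  obtain rfl : t = 0 := by omega
  simpa using h

theorem arcRel_one {u v : V} : ArcRel G 1 u v ↔ G.Adj u v := by
  refine ⟨?_, ArcRel.of_adj⟩
  rintro ⟨x, hx, rfl, rfl⟩
  exact hx.1 0 (by omega)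

theorem arcRel_two {u v : V} : ArcRel G 2 u v ↔ u ≠ v ∧ ∃ w, G.Adj u w ∧ G.Adj w v := by
  constructor
  · rintro ⟨x, hx, rfl, rfl⟩
    exact ⟨hx.2 0 (by omega), x 1, hx.1 0 (by omega), hx.1 1 (by omega)⟩
  · rintro ⟨hne, w, h1, h2⟩
    refine ⟨fun t => if t = 0 then u else if t = 1 then w else v,
      ⟨fun t ht => ?_, fun t ht => ?_⟩, by simp, by simp⟩
    · interval_cases t <;> simpa
    · obtain rfl : t = 0 := by omega
      simpa using hne

theorem IsNArc.sub {n i j : ℕ} {x : ℕ → V} (h : IsNArc G n x) (hij : i ≤ j) (hj : j ≤ n) :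
    ArcRel G (j - i) (x i) (x j) :=
  ⟨_, h.shift (i := i) (m := j - i) (by omega), by simp, by simp [hij]⟩

/-- the walk along a sequence -/
theorem exists_walk_of_seq (x : ℕ → V) (n : ℕ) (h : ∀ i < n, G.Adj (x i) (x (i + 1))) :
    ∃ p : G.Walk (x 0) (x n), p.length = n ∧ p.support = (List.range (n + 1)).map x ∧
      p.edges = (List.range n).map (fun i => s(x i, x (i + 1))) := by
  induction n with
  | zero => exact ⟨Walk.nil, by simp, by simp, by simp⟩
  | succ n ih =>
    obtain ⟨p, h1, h2, h3⟩ := ih (fun i hi => h i (by omega))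
    refine ⟨p.concat (h n (by omega)), by simp [h1], ?_, ?_⟩
    · rw [Walk.support_concat, h2, List.range_succ (n := n + 1)]; simp
    · rw [Walk.edges_concat, h3, List.range_succ (n := n)]; simp

theorem egirth_le_of_injOn {m : ℕ} {y : ℕ → V} (hm : 3 ≤ m)
    (hadj : ∀ i < m, G.Adj (y i) (y (i + 1))) (hclosed : y 0 = y m)
    (hinj : ∀ i < m, ∀ j < m, y i = y j → i = j) : G.egirth ≤ m := by
  obtain ⟨p, h1, h2, h3⟩ := exists_walk_of_seq (G := G) (fun t => y (t + 1)) (m - 1)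
    (fun i hi => hadj (i + 1) (by omega))
  have hend : y (m - 1 + 1) = y 0 := by rw [show m - 1 + 1 = m by omega, hclosed]
  have hpath : p.IsPath := by
    rw [Walk.isPath_def, h2]
    refine List.Nodup.map_on ?_ List.nodup_range
    intro i hi j hj e
    simp only [List.mem_range] at hi hj
    have key : ∀ i, i < m - 1 + 1 → y (i + 1) = y (if i + 1 = m then 0 else i + 1) := by
      intro i hi
      split_ifs with h
      · rw [h, hclosed]
      · rfl
    rw [key i hi, key j hj] at e
    have := hinj _ (by split_ifs <;> omega) _ (by split_ifs <;> omega) e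
    split_ifs at this <;> omega
  have hcyc : (Walk.cons (hadj 0 (by omega)) (p.copy rfl hend)).IsCycle := by
    rw [Walk.cons_isCycle_iff]
    refine ⟨by simpa using hpath, ?_⟩
    rw [Walk.edges_copy, h3]
    simp only [List.mem_map, List.mem_range, not_exists, not_and]
    intro i hi e
    rw [Sym2.eq_iff] at e
    rcases e with ⟨e1, e2⟩ | ⟨e1, e2⟩
    · have := hinj (i + 1) (by omega) 0 (by omega) e1
      omega
    · have h0 := hinj (i + 1) (by omega) 1 (by omega) e1
      obtain rfl : i = 0 := by omega
      have := hinj (0 + 1 + 1) (by omega) 0 (by omega) e2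
      omega
  have := hcyc.egirth_le_length
  simpa [h1, show m - 1 + 1 = m by omega] using this

theorem egirth_le_of_closed {n : ℕ} : ∀ {x : ℕ → V}, IsNArc G n x → 1 ≤ n → x 0 = x n →
    G.egirth ≤ n := by
  induction n using Nat.strong_induction_on with
  | _ n ih =>
    intro x hx hn hc
    by_cases hinj : ∀ i < n, ∀ j < n, x i = x j → i = j
    · refine egirth_le_of_injOn ?_ hx.1 hc hinj
      by_contra hlt
      have : n = 1 ∨ n = 2 := by omega
      rcases this with rfl | rfl
      · exact (hx.1 0 (by omega)).ne hc
      · exact hx.2 0 (by omega) hc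
    · push Not at hinj
      obtain ⟨i, hi, j, hj, e, hne⟩ := hinj
      have main : ∀ i j, i < j → j < n → x i = x j → G.egirth ≤ n := by
        intro i j hij hj e
        have h1 := hx.shift (i := i) (m := j - i) (by omega)
        have := ih (j - i) (by omega) h1 (by omega) (by simp [show i + (j - i) = j by omega, e])
        refine this.trans ?_
        exact_mod_cast (by omega : j - i ≤ n)
      rcases lt_or_gt_of_ne hne with h | h
      · exact main i j h hj e
      · exact main j i h hi e.symm

/-- Two arcs with the same ends and total length less than the girth coincide. -/
theorem arc_unique {g : ℕ} (hg : ∀ n x, IsNArc G n x → 1 ≤ n → x 0 = x n → g ≤ n) :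
    ∀ (a b : ℕ) (x y : ℕ → V), IsNArc G a x → IsNArc G b y → x 0 = y 0 → x a = y b →
    a + b < g → a = b ∧ ∀ i ≤ a, x i = y i := by
  intro a
  induction a with
  | zero =>
    intro b x y hx hy h0 h1 hlt
    have : b = 0 := by
      by_contra hb
      have := hg b y hy (by omega) (by rw [← h0, h1])
      omega
    subst this
    exact ⟨rfl, fun i hi => by rw [Nat.le_zero.1 hi, h0]⟩
  | succ a ih =>
    intro b x y hx hy h0 h1 hlt
    rcases b with _ | b
    · have := hg (a + 1) x hx (by omega) (by rw [h0, h1])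
      omega
    by_cases he : x a = y b
    · obtain ⟨e1, e2⟩ := ih b x y (hx.mono (by omega)) (hy.mono (by omega)) h0 he (by omega)
      refine ⟨by omega, fun i hi => ?_⟩
      rcases Nat.lt_or_ge a i with h | h
      · obtain rfl : i = a + 1 := by omega
        rw [h1, e1]
      · exact e2 i h
    · exfalso
      have hz : IsNArc G (a + 1 + (b + 1))
          (fun t => if t ≤ a + 1 then x t else y (a + 1 + (b + 1) - t)) := by
        refine ⟨fun t ht => ?_, fun t ht => ?_⟩
        · rcases lt_trichotomy t (a + 1) with h | h | h
          · simp only [show t ≤ a + 1 by omega, show t + 1 ≤ a + 1 by omega, if_true]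
            exact hx.1 t (by omega)
          · subst h
            simp only [le_refl, if_true, show ¬ (a + 1 + 1 ≤ a + 1) by omega, if_false, h1]
            rw [show a + 1 + (b + 1) - (a + 1 + 1) = b by omega]
            exact (hy.1 b (by omega)).symm
          · simp only [show ¬ t ≤ a + 1 by omega, show ¬ t + 1 ≤ a + 1 by omega, if_false]
            have := hy.1 (a + 1 + (b + 1) - (t + 1)) (by omega)
            rw [show a + 1 + (b + 1) - (t + 1) + 1 = a + 1 + (b + 1) - t by omega] at this
            exact this.symm
        · rcases Nat.lt_or_ge (a + 1) t with h | h
          · simp only [show ¬ t ≤ a + 1 by omega, show ¬ t + 2 ≤ a + 1 by omega, if_false]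
            have := hy.2 (a + 1 + (b + 1) - (t + 2)) (by omega)
            rw [show a + 1 + (b + 1) - (t + 2) + 2 = a + 1 + (b + 1) - t by omega] at this
            exact this.symm
          · rcases Nat.lt_or_ge t a with h' | h'
            · simp only [show t ≤ a + 1 by omega, show t + 2 ≤ a + 1 by omega, if_true]
              exact hx.2 t (by omega)
            · have : t = a ∨ t = a + 1 := by omega
              rcases this with rfl | rfl
              · simp only [show t ≤ t + 1 by omega, show ¬ t + 2 ≤ t + 1 by omega, if_true, if_false]
                rw [show t + 1 + (b + 1) - (t + 2) = b by omega]
                exact he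
              · simp only [le_refl, if_true, show ¬ a + 1 + 2 ≤ a + 1 by omega, if_false, h1]
                have := hy.2 (b - 1) (by omega)
                rw [show a + 1 + (b + 1) - (a + 1 + 2) = b - 1 by omega]
                rw [show b - 1 + 2 = b + 1 by omega] at this
                exact this.symm
      have := hg _ _ hz (by omega) (by simp [h0])
      omega

theorem ArcRel.unique {g : ℕ} (hg : ∀ n x, IsNArc G n x → 1 ≤ n → x 0 = x n → g ≤ n)
    {a b : ℕ} {u v : V} (h1 : ArcRel G a u v) (h2 : ArcRel G b u v) (h : a + b < g) : a = b := by
  obtain ⟨x, hx, rfl, rfl⟩ := h1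
  obtain ⟨y, hy, h3, h4⟩ := h2
  exact (arc_unique hg a b x y hx hy h3.symm h4.symm h).1

/-- An automorphism fixing both ends of a short arc fixes the arc pointwise. -/
theorem arc_fixed {g : ℕ} (hg : ∀ n x, IsNArc G n x → 1 ≤ n → x 0 = x n → g ≤ n)
    {n i j : ℕ} {x : ℕ → V} (hx : IsNArc G n x) (hij : i ≤ j) (hj : j ≤ n) (hlt : 2 * (j - i) < g)
    (φ : G ≃g G) (hi : φ (x i) = x i) (hj' : φ (x j) = x j) :
    ∀ t, i ≤ t → t ≤ j → φ (x t) = x t := by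
  have h1 := hx.shift (i := i) (m := j - i) (by omega)
  have := (arc_unique hg _ _ _ _ (h1.map φ) h1 (by simp [hi])
    (by simp [show i + (j - i) = j by omega, hj']) (by omega)).2
  intro t ht1 ht2
  have := this (t - i) (by omega)
  simpa [show i + (t - i) = t by omega] using this

/-- A shortest cycle as an arc. -/
theorem exists_closed_arc (hgirth : G.egirth ≠ ⊤) :
    ∃ (g : ℕ) (c : ℕ → V), 3 ≤ g ∧ IsNArc G g c ∧ c 0 = c g ∧
      ∀ n x, IsNArc G n x → 1 ≤ n → x 0 = x n → g ≤ n := by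
  have hna : ¬ G.IsAcyclic := fun h => hgirth (egirth_eq_top.2 h)
  obtain ⟨a, p, hp, hl⟩ := exists_egirth_eq_length.2 hna
  refine ⟨p.length, p.getVert, hp.three_le_length, ⟨fun i hi => p.adj_getVert_succ hi, ?_⟩, by simp,
    fun n x hx hn hc => ?_⟩
  · intro i hi e
    have h3 := hp.three_le_length
    by_cases h0 : i = 0
    · subst h0
      have := hp.getVert_injOn' (by simp) (by simp; omega) e
      omega
    · have := hp.getVert_injOn (by simp; omega) (by simp; omega) e
      omega
  · have := egirth_le_of_closed hx hn hc
    rw [hl] at this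
    exact_mod_cast this
end Arcs

section Cubic
variable {V : Type*} {G : SimpleGraph V}

theorem encard_pair_le_two (a b : V) : ({a, b} : Set V).encard ≤ 2 := by
  refine (Set.encard_insert_le _ _).trans ?_
  rw [Set.encard_singleton, one_add_one_eq_two]

theorem nbrs_all (hcubic : ∀ v : V, (G.neighborSet v).ncard = 3) (v : V) :
    ∃ a b c, a ≠ b ∧ a ≠ c ∧ b ≠ c ∧ G.Adj v a ∧ G.Adj v b ∧ G.Adj v c ∧
      ∀ w, G.Adj v w → w = a ∨ w = b ∨ w = c := by
  obtain ⟨a, b, c, h1, h2, h3, h⟩ := Set.ncard_eq_three.1 (hcubic v)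
  have key : ∀ w, G.Adj v w ↔ w = a ∨ w = b ∨ w = c := by
    intro w
    rw [← mem_neighborSet, h]; simp
  exact ⟨a, b, c, h1, h2, h3, by simp [key], by simp [key], by simp [key], fun w => (key w).1⟩

theorem nbrs_one (hcubic : ∀ v : V, (G.neighborSet v).ncard = 3) {v a : V} (h : G.Adj v a) :
    ∃ b c, a ≠ b ∧ a ≠ c ∧ b ≠ c ∧ G.Adj v b ∧ G.Adj v c ∧
      ∀ w, G.Adj v w → w = a ∨ w = b ∨ w = c := by
  obtain ⟨x, y, z, h1, h2, h3, hx, hy, hz, hall⟩ := nbrs_all hcubic v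
  rcases hall a h with rfl | rfl | rfl
  · exact ⟨y, z, h1, h2, h3, hy, hz, hall⟩
  · exact ⟨x, z, h1.symm, h3, h2, hx, hz, fun w hw => by have := hall w hw; tauto⟩
  · exact ⟨x, y, h2.symm, h3.symm, h1, hx, hy, fun w hw => by have := hall w hw; tauto⟩

theorem nbrs_two (hcubic : ∀ v : V, (G.neighborSet v).ncard = 3) {v a b : V} (h : G.Adj v a)
    (h' : G.Adj v b) (hab : a ≠ b) :
    ∃ c, a ≠ c ∧ b ≠ c ∧ G.Adj v c ∧ ∀ w, G.Adj v w → w = a ∨ w = b ∨ w = c := by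
  obtain ⟨x, y, h1, h2, h3, hx, hy, hall⟩ := nbrs_one hcubic h
  rcases hall b h' with rfl | rfl | rfl
  · exact absurd rfl hab
  · exact ⟨y, h2, h3, hy, hall⟩
  · exact ⟨x, h1, h3.symm, hx, fun w hw => by have := hall w hw; tauto⟩

theorem conn_induct (hconn : G.Connected) (P : V → Prop) (v : V) (hv : P v)
    (hstep : ∀ u w, P u → G.Adj u w → P w) : ∀ w, P w := by
  intro w
  obtain ⟨p⟩ := hconn.preconnected v w
  induction p with
  | nil => exact hv
  | cons h p ih => exact ih (hstep _ _ hv h)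

/-- If a nontrivial automorphism fixes an `s`-arc then `s`-arc-transitivity lifts. -/
theorem arcTransitive_succ (hconn : G.Connected)
    (hcubic : ∀ v : V, (G.neighborSet v).ncard = 3) {s : ℕ} (hs : 1 ≤ s)
    (ht : IsNArcTransitive G s) (φ : G ≃g G) (hφ : ¬ ∀ v, φ v = v) {x : ℕ → V}
    (hx : IsNArc G s x) (hfix : ∀ i ≤ s, φ (x i) = x i) : IsNArcTransitive G (s + 1) := by
  have hex : ∃ (x : ℕ → V) (w : V), IsNArc G s x ∧ (∀ i ≤ s, φ (x i) = x i) ∧ G.Adj (x s) w ∧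
      φ w ≠ w := by
    by_contra hno
    push Not at hno
    apply hφ
    have : ∀ v, ∃ x, IsNArc G s x ∧ (∀ i ≤ s, φ (x i) = x i) ∧ x s = v := by
      refine conn_induct hconn _ (x s) ⟨x, hx, hfix, rfl⟩ ?_
      rintro u w ⟨y, hy, hyf, rfl⟩ hadj
      by_cases hw : y (s - 1) = w
      · obtain ⟨z, _, h1, _, _, hz, _, _⟩ := nbrs_one hcubic (hy.1 0 (by omega))
        have hzf : φ z = z := by
          refine hno _ z hy.rev (fun i hi => hyf _ (by omega)) ?_
          simpa using hz
        refine ⟨_, (hy.cons hz (fun _ => h1)).mono (by omega), fun i hi => ?_, ?_⟩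
        · split_ifs
          · exact hzf
          · exact hyf _ (by omega)
        · simpa [show s ≠ 0 by omega] using hw
      · have hwf := hno y w hy hyf hadj
        refine ⟨_, (hy.snoc hadj (fun _ => hw)).shift (i := 1) (m := s) (by omega),
          fun i hi => ?_, ?_⟩
        · split_ifs with h
          · exact hyf _ h
          · exact hwf
        · simp
    intro v
    obtain ⟨y, -, hyf, rfl⟩ := this v
    exact hyf s le_rfl
  obtain ⟨x, w, hx, hfix, hadj, hw⟩ := hex
  have hφadj : G.Adj (x s) (φ w) := by
    have := φ.map_rel_iff.2 hadj
    rwa [hfix s le_rfl] at this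
  have hpre := hfix (s - 1) (by omega)
  have hpadj : G.Adj (x s) (x (s - 1)) := by
    have := hx.1 (s - 1) (by omega)
    rw [show s - 1 + 1 = s by omega] at this
    exact this.symm
  have hne1 : x (s - 1) ≠ w := fun e => hw (by rw [← e, hpre])
  have hne2 : x (s - 1) ≠ φ w := fun e => hne1 (φ.injective (hpre.trans e))
  have hall : ∀ u, G.Adj (x s) u → u ≠ x (s - 1) → u = w ∨ u = φ w := by
    obtain ⟨c, _, _, _, h⟩ := nbrs_two hcubic hpadj hadj hne1
    intro u hu hne
    have h1 := h u hu
    have h2 := h (φ w) hφadj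
    grind
  have key : ∀ y, IsNArc G (s + 1) y → ∃ ψ : G ≃g G, (∀ i ≤ s, ψ (y i) = x i) ∧
      ψ (y (s + 1)) = φ w := by
    intro y hy
    obtain ⟨ψ, hψ⟩ := ht y x (hy.mono (by omega)) hx
    have h1 : G.Adj (x s) (ψ (y (s + 1))) := by
      rw [← hψ s le_rfl]
      exact ψ.map_rel_iff.2 (hy.1 s (by omega))
    have h2 : ψ (y (s + 1)) ≠ x (s - 1) := by
      rw [← hψ (s - 1) (by omega)]
      intro e
      have := hy.2 (s - 1) (by omega)
      rw [show s - 1 + 2 = s + 1 by omega] at this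
      exact this (ψ.injective e).symm
    rcases hall _ h1 h2 with h | h
    · exact ⟨ψ.trans φ, fun i hi => by simp [hψ i hi, hfix i hi], by simp [h]⟩
    · exact ⟨ψ, hψ, h⟩
  intro y z hy hz
  obtain ⟨ψ, h1, h2⟩ := key y hy
  obtain ⟨χ, h3, h4⟩ := key z hz
  refine ⟨ψ.trans χ.symm, fun i hi => ?_⟩
  apply χ.injective
  simp only [RelIso.trans_apply, RelIso.apply_symm_apply]
  rcases Nat.lt_or_ge s i with h | h
  · obtain rfl : i = s + 1 := by omega
    rw [h2, h4]
  · rw [h1 i h, h3 i h]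

theorem not_arcTransitive_of_girth (hcubic : ∀ v : V, (G.neighborSet v).ncard = 3)
    {g k : ℕ} {c : ℕ → V} (h5 : 5 ≤ g) (hk : k = g / 2 + 1) (hc : IsNArc G g c) (hc0 : c 0 = c g)
    (hg : ∀ n x, IsNArc G n x → 1 ≤ n → x 0 = x n → g ≤ n) : ¬ IsNArcTransitive G (k + 1) := by
  intro ht
  have ha1 := hc.1 k (by omega)
  have ha2 : G.Adj (c k) (c (k - 1)) := by
    have := hc.1 (k - 1) (by omega)
    rw [show k - 1 + 1 = k by omega] at this
    exact this.symm
  have hne : c (k - 1) ≠ c (k + 1) := by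
    have := hc.2 (k - 1) (by omega)
    rwa [show k - 1 + 2 = k + 1 by omega] at this
  obtain ⟨y, hy1, hy2, hy, -⟩ := nbrs_two hcubic ha2 ha1 hne
  have harc := (hc.mono (show k ≤ g by omega)).snoc hy (fun _ => hy1)
  obtain ⟨φ, hφ⟩ := ht _ _ (hc.mono (show k + 1 ≤ g by omega)) harc
  have e0 := hφ 0 (by omega)
  have e1 := hφ (k + 1) le_rfl
  simp at e0 e1
  have hR : ArcRel G (g - (k + 1)) (c 0) (c (k + 1)) := by
    rw [hc0]
    exact (hc.sub (show k + 1 ≤ g by omega) le_rfl).symm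
  have hR2 := hR.map φ
  rw [e0, e1] at hR2
  obtain ⟨p, hp, hp0, hp1⟩ := hR2
  have hq := (hc.shift (i := k) (m := g - k) (by omega)).rev
  by_cases hpe : p (g - (k + 1) - 1) = c k
  · have := (arc_unique hg _ _ _ _ (hp.mono (show g - (k + 1) - 1 ≤ _ by omega)) hq
      (by simp [hp0, hc0, show k + (g - k) = g by omega]) (by simp [hpe]) (by omega)).1
    omega
  · have hp' := hp.snoc (w := c k) (by rw [hp1]; exact hy.symm) (fun _ => hpe)
    have := (arc_unique hg _ _ _ _ hp' hq
      (by simp [hp0, hc0, show k + (g - k) = g by omega]) (by simp) (by omega)).2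
      (g - (k + 1)) (by omega)
    simp [hp1, show g - k - (g - (k + 1)) = 1 by omega] at this
    exact hy2 this.symm

theorem rigid (hconn : G.Connected) (hcubic : ∀ v : V, (G.neighborSet v).ncard = 3)
    (hat : IsNArcTransitive G 1) {k : ℕ} (hk : ¬ IsNArcTransitive G (k + 1))
    (φ : G ≃g G) {x : ℕ → V} (hx : IsNArc G k x) (hfix : ∀ i ≤ k, φ (x i) = x i) :
    ∀ v, φ v = v := by
  by_contra hφ
  have : ∀ s, 1 ≤ s → s ≤ k + 1 → IsNArcTransitive G s := by
    intro s hs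
    induction s, hs using Nat.le_induction with
    | base => exact fun _ => hat
    | succ s hs ih =>
      intro hle
      exact arcTransitive_succ hconn hcubic hs (ih (by omega)) φ hφ (hx.mono (by omega))
        (fun i hi => hfix i (by omega))
  exact hk (this (k + 1) (by omega) le_rfl)

/-- Arc-transitivity makes all pairs of neighbours alike. -/
theorem pair_transfer (hcubic : ∀ v : V, (G.neighborSet v).ncard = 3)
    (hat : IsNArcTransitive G 1) (P : V → V → V → Prop)
    (hinv : ∀ (φ : G ≃g G) v a b, P v a b → P (φ v) (φ a) (φ b))
    (hsymm : ∀ v a b, P v a b → P v b a) {v a b : V} (ha : G.Adj v a) (hb : G.Adj v b)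
    (hab : a ≠ b) (hP : P v a b) :
    ∀ w c d, G.Adj w c → G.Adj w d → c ≠ d → P w c d := by
  intro w c d hc hd hcd
  obtain ⟨e, he1, he2, he, -⟩ := nbrs_two hcubic ha hb hab
  obtain ⟨f, hf1, hf2, hf, hfall⟩ := nbrs_two hcubic hc hd hcd
  obtain ⟨φ, hφ⟩ := hat (fun i => if i = 0 then v else e) (fun i => if i = 0 then w else f)
    ⟨fun i hi => by obtain rfl : i = 0 := by omega
                    simpa using he, fun i hi => by omega⟩
    ⟨fun i hi => by obtain rfl : i = 0 := by omega
                    simpa using hf, fun i hi => by omega⟩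
  have h0 := hφ 0 (by omega)
  have h1 := hφ 1 (by omega)
  simp at h0 h1
  have hP' := hinv φ _ _ _ hP
  have hA : G.Adj w (φ a) := by rw [← h0]; exact φ.map_rel_iff.2 ha
  have hB : G.Adj w (φ b) := by rw [← h0]; exact φ.map_rel_iff.2 hb
  have n1 : φ a ≠ f := fun h => he1 (φ.injective (h.trans h1.symm))
  have n2 : φ b ≠ f := fun h => he2 (φ.injective (h.trans h1.symm))
  have n3 : φ a ≠ φ b := fun h => hab (φ.injective h)
  rw [h0] at hP'
  rcases hfall _ hA with h | h | h <;> rcases hfall _ hB with h' | h' | h'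
  · exact absurd (h.trans h'.symm) n3
  · rwa [h, h'] at hP'
  · exact absurd h' n2
  · rw [h, h'] at hP'; exact hsymm _ _ _ hP'
  · exact absurd (h.trans h'.symm) n3
  · exact absurd h' n2
  all_goals exact absurd h n1

/-- An injective homomorphism from a cubic graph to a connected cubic graph is an isomorphism. -/
theorem iso_of_inj {W : Type*} [Nonempty W] {H : SimpleGraph W} (hconn : G.Connected)
    (hcubic : ∀ v : V, (G.neighborSet v).ncard = 3)
    (hH : ∀ w : W, (H.neighborSet w).ncard = 3) (f : W → V) (hf : Function.Injective f)
    (hadj : ∀ a b, H.Adj a b → G.Adj (f a) (f b)) : Nonempty (G ≃g H) := by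
  have himg : ∀ a, f '' H.neighborSet a = G.neighborSet (f a) := by
    intro a
    refine Set.eq_of_subset_of_ncard_le ?_ ?_ (Set.finite_of_ncard_ne_zero (by rw [hcubic]; omega))
    · rintro _ ⟨b, hb, rfl⟩
      exact hadj a b hb
    · rw [Set.ncard_image_of_injective _ hf, hcubic, hH]
  have hsurj : Function.Surjective f := by
    obtain ⟨w⟩ := ‹Nonempty W›
    refine conn_induct hconn _ (f w) ⟨w, rfl⟩ ?_
    rintro _ v ⟨a, rfl⟩ h
    have : v ∈ f '' H.neighborSet a := by rw [himg]; exact h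
    obtain ⟨b, _, e⟩ := this
    exact ⟨b, e⟩
  have iso : H ≃g G := ⟨Equiv.ofBijective f (show Function.Bijective f from ⟨hf, hsurj⟩), by
    intro a b
    change G.Adj (f a) (f b) ↔ H.Adj a b
    refine ⟨fun h => ?_, hadj a b⟩
    have : f b ∈ f '' H.neighborSet a := by rw [himg]; exact h
    obtain ⟨b', hb', e⟩ := this
    rw [hf e] at hb'
    exact hb'⟩
  exact ⟨iso.symm⟩

set_option maxHeartbeats 1000000 in
theorem cost_of_girth_ge_six (hconn : G.Connected) (hcubic : ∀ v : V, (G.neighborSet v).ncard = 3)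
    (hat : IsNArcTransitive G 1) {g k : ℕ} (h7 : 6 ≤ g) (hk : k = g / 2 + 1)
    (hg : ∀ n x, IsNArc G n x → 1 ≤ n → x 0 = x n → g ≤ n) (hnt : ¬ IsNArcTransitive G (k + 1))
    {x : ℕ → V} (hx : IsNArc G k x) (hor : 7 ≤ g ∨ ¬ ArcRel G (k - 2) (x 0) (x k)) :
    ∃ S : Set V, S.encard ≤ 4 ∧ IsDistinguishing G S := by
  have hU := fun a b u v h1 h2 h => ArcRel.unique (G := G) hg (a := a) (b := b) (u := u) (v := v) h1 h2 h
  have hcard : ∀ a b c d : V, ({a, b, c, d} : Set V).encard ≤ 4 := by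
    intro a b c d
    refine (Set.encard_insert_le _ _).trans ?_
    refine (add_le_add_left (Set.encard_insert_le _ _) _).trans ?_
    refine (add_le_add_left (add_le_add_left (encard_pair_le_two _ _) _) _).trans ?_
    norm_num
  have r01 := hx.sub (i := 0) (j := 1) (by omega) (by omega)
  have r02 := hx.sub (i := 0) (j := 2) (by omega) (by omega)
  have r0k := hx.sub (i := 0) (j := k) (by omega) (by omega)
  have r1k := hx.sub (i := 1) (j := k) (by omega) (by omega)
  by_cases hR : ArcRel G (k - 2) (x 0) (x k)
  · have h7 : 7 ≤ g := by tauto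
    have hev : g = 2 * (k - 1) := by
      by_contra hodd
      have := hU _ _ _ _ r0k hR (by omega)
      omega
    have r03 := hx.sub (i := 0) (j := 3) (by omega) (by omega)
    have r13 := hx.sub (i := 1) (j := 3) (by omega) (by omega)
    have r3k := hx.sub (i := 3) (j := k) (by omega) (by omega)
    have n03 : ¬ G.Adj (x 0) (x 3) := fun h => by
      have := hU _ _ _ _ r03 (ArcRel.of_adj h) (by omega); omega
    have n13 : ¬ G.Adj (x 1) (x 3) := fun h => by
      have := hU _ _ _ _ r13 (ArcRel.of_adj h) (by omega); omega
    have n0k : ¬ G.Adj (x 0) (x k) := fun h => by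
      have := hU _ _ _ _ hR (ArcRel.of_adj h) (by omega); omega
    have n1k : ¬ G.Adj (x 1) (x k) := fun h => by
      have := hU _ _ _ _ r1k (ArcRel.of_adj h) (by omega); omega
    have n3k : ¬ G.Adj (x 3) (x k) := fun h => by
      have := hU _ _ _ _ r3k (ArcRel.of_adj h) (by omega); omega
    refine ⟨{x 0, x 1, x 3, x k}, hcard _ _ _ _, fun φ hφ => ?_⟩
    have hmem : ∀ v ∈ ({x 0, x 1, x 3, x k} : Set V), φ v ∈ ({x 0, x 1, x 3, x k} : Set V) := by
      intro v hv
      have := Set.mem_image_of_mem φ hv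
      rwa [hφ] at this
    have m0 := hmem (x 0) (by simp)
    have m1 := hmem (x 1) (by simp)
    have m3 := hmem (x 3) (by simp)
    have mk := hmem (x k) (by simp)
    simp only [Set.mem_insert_iff, Set.mem_singleton_iff] at m0 m1 m3 mk
    have a01 : G.Adj (φ (x 0)) (φ (x 1)) := φ.map_rel_iff.2 (hx.1 0 (by omega))
    have s03 := r03.map φ
    have s13 := r13.map φ
    have inj : ∀ u v, φ u = φ v → u = v := fun u v h => φ.injective h
    have d01 : x 0 ≠ x 1 := (hx.1 0 (by omega)).ne
    -- the pair x 0, x 1 is preserved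
    have hp : (φ (x 0) = x 0 ∧ φ (x 1) = x 1) ∨ (φ (x 0) = x 1 ∧ φ (x 1) = x 0) := by
      have i0 := G.irrefl (v := x 0)
      have i1 := G.irrefl (v := x 1)
      have i3 := G.irrefl (v := x 3)
      have ik := G.irrefl (v := x k)
      have n03' := fun h => n03 (SimpleGraph.Adj.symm h)
      have n13' := fun h => n13 (SimpleGraph.Adj.symm h)
      have n0k' := fun h => n0k (SimpleGraph.Adj.symm h)
      have n1k' := fun h => n1k (SimpleGraph.Adj.symm h)
      have n3k' := fun h => n3k (SimpleGraph.Adj.symm h)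
      rcases m0 with h | h | h | h <;> rcases m1 with h' | h' | h' | h' <;> rw [h, h'] at a01 <;>
        first
        | contradiction
        | exact Or.inl ⟨h, h'⟩
        | exact Or.inr ⟨h, h'⟩
    have d03 : x 0 ≠ x 3 := fun h => n13 (by rw [← h]; exact (hx.1 0 (by omega)).symm)
    have d13 : x 1 ≠ x 3 := hx.2 1 (by omega)
    have d0k : x 0 ≠ x k := fun h => n1k (by rw [← h]; exact (hx.1 0 (by omega)).symm)
    have d1k : x 1 ≠ x k := fun h => n0k (by rw [← h]; exact (hx.1 0 (by omega)))
    have d3k : x 3 ≠ x k := by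
      intro h
      have := hx.sub (i := 3) (j := k) (by omega) (by omega)
      rw [← h] at this
      obtain ⟨y, hy, e1, e2⟩ := this
      have := hg _ y hy (by omega) (by rw [e1, e2])
      omega
    have hp3 : φ (x 3) = x 3 ∨ φ (x 3) = x k := by
      have i1 := inj (x 0) (x 3)
      have i2 := inj (x 1) (x 3)
      rcases hp with ⟨h, h'⟩ | ⟨h, h'⟩ <;> rw [h] at i1 <;> rw [h'] at i2 <;>
        rcases m3 with h3 | h3 | h3 | h3 <;> grind
    have hp0 : φ (x 0) = x 0 ∧ φ (x 1) = x 1 := by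
      rcases hp with h | ⟨h, h'⟩
      · exact h
      · exfalso
        rw [h] at s03
        rcases hp3 with h3 | h3 <;> rw [h3] at s03
        · have := hU _ _ _ _ s03 r13 (by omega); omega
        · have := hU _ _ _ _ s03 r1k (by omega); omega
    have hf3 : φ (x 3) = x 3 := by
      rcases hp3 with h3 | h3
      · exact h3
      · exfalso
        rw [hp0.2, h3] at s13
        have := hU _ _ _ _ s13 r1k (by omega); omega
    have hfk : φ (x k) = x k := by
      have i0 := inj (x 0) (x k)
      have i1 := inj (x 1) (x k)
      have i3 := inj (x 3) (x k)
      rcases mk with h | h | h | h <;> grind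
    have f1 := arc_fixed hg hx (i := 0) (j := 3) (by omega) (by omega) (by omega) φ hp0.1 hf3
    have f2 := arc_fixed hg hx (i := 3) (j := k) (by omega) (by omega) (by omega) φ hf3 hfk
    refine rigid hconn hcubic hat hnt φ hx (fun i hi => ?_)
    rcases Nat.lt_or_ge 3 i with h | h
    · exact f2 i h.le hi
    · exact f1 i (by omega) h
  · have r2k := hx.sub (i := 2) (j := k) (by omega) (by omega)
    have n02 : ¬ G.Adj (x 0) (x 2) := fun h => by
      have := hU _ _ _ _ r02 (ArcRel.of_adj h) (by omega); omega
    have n0k : ¬ G.Adj (x 0) (x k) := fun h => by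
      have := hU _ _ _ _ r0k (ArcRel.of_adj h) (by omega); omega
    have n1k : ¬ G.Adj (x 1) (x k) := fun h => by
      have := hU _ _ _ _ r1k (ArcRel.of_adj h) (by omega); omega
    have n2k : ¬ G.Adj (x 2) (x k) := fun h => by
      have := hU _ _ _ _ r2k (ArcRel.of_adj h) (by omega); omega
    refine ⟨{x 0, x 1, x 2, x k}, hcard _ _ _ _, fun φ hφ => ?_⟩
    have hmem : ∀ v ∈ ({x 0, x 1, x 2, x k} : Set V), φ v ∈ ({x 0, x 1, x 2, x k} : Set V) := by
      intro v hv
      have := Set.mem_image_of_mem φ hv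
      rwa [hφ] at this
    have m0 := hmem (x 0) (by simp)
    have m1 := hmem (x 1) (by simp)
    have m2 := hmem (x 2) (by simp)
    have mk := hmem (x k) (by simp)
    simp only [Set.mem_insert_iff, Set.mem_singleton_iff] at m0 m1 m2 mk
    have a01 := hx.1 0 (by omega)
    have a12 := hx.1 1 (by omega)
    simp only [zero_add, one_add_one_eq_two] at a01 a12
    have b01 : G.Adj (φ (x 0)) (φ (x 1)) := φ.map_rel_iff.2 a01
    have b12 : G.Adj (φ (x 1)) (φ (x 2)) := φ.map_rel_iff.2 a12
    have inj : ∀ u v, φ u = φ v → u = v := fun u v h => φ.injective h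
    have d02 : x 0 ≠ x 2 := hx.2 0 (by omega)
    have d0k : x 0 ≠ x k := fun h => n1k (by rw [← h]; exact a01.symm)
    have d1k : x 1 ≠ x k := fun h => n0k (by rw [← h]; exact a01)
    have d2k : x 2 ≠ x k := fun h => n1k (by rw [← h]; exact a12)
    have hne : φ (x 0) ≠ φ (x 2) := fun h => d02 (inj _ _ h)
    have hp : (φ (x 0) = x 0 ∧ φ (x 1) = x 1 ∧ φ (x 2) = x 2) ∨
        (φ (x 0) = x 2 ∧ φ (x 1) = x 1 ∧ φ (x 2) = x 0) := by
      have hirr := fun v => G.irrefl (v := v)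
      clear r01 r02 r0k r1k r2k hR hor hU hmem hφ hcard
      have n02' := fun h => n02 (SimpleGraph.Adj.symm h)
      have n0k' := fun h => n0k (SimpleGraph.Adj.symm h)
      have n1k' := fun h => n1k (SimpleGraph.Adj.symm h)
      have n2k' := fun h => n2k (SimpleGraph.Adj.symm h)
      have i0 := hirr (x 0)
      have i1 := hirr (x 1)
      have i2 := hirr (x 2)
      have ik := hirr (x k)
      rcases m1 with h1 | h1 | h1 | h1 <;> rcases m0 with h0 | h0 | h0 | h0 <;>
        rw [h0, h1] at b01 <;> first | contradiction | skip
      all_goals rcases m2 with h2 | h2 | h2 | h2 <;> rw [h1, h2] at b12 <;>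
        first | contradiction | (rw [h0, h2] at hne; first | (exact absurd rfl hne) | skip)
      all_goals first | exact Or.inl ⟨h0, h1, h2⟩ | exact Or.inr ⟨h0, h1, h2⟩
    have hfk : φ (x k) = x k := by
      have i0 := inj (x 0) (x k)
      have i1 := inj (x 1) (x k)
      have i3 := inj (x 2) (x k)
      rcases mk with h | h | h | h <;> grind
    have hf : φ (x 0) = x 0 ∧ φ (x 1) = x 1 ∧ φ (x 2) = x 2 := by
      rcases hp with h | ⟨h0, h1, h2⟩
      · exact h
      · exfalso
        have := r2k.map φ
        rw [h2, hfk] at this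
        exact hR this
    have f2 := arc_fixed hg hx (i := 2) (j := k) (by omega) (by omega) (by omega) φ hf.2.2 hfk
    refine rigid hconn hcubic hat hnt φ hx (fun i hi => ?_)
    rcases Nat.lt_or_ge 1 i with h | h
    · exact f2 i h hi
    · interval_cases i
      · exact hf.1
      · exact hf.2.1

theorem cost_of_girth_five (hconn : G.Connected) (hcubic : ∀ v : V, (G.neighborSet v).ncard = 3)
    (hat : IsNArcTransitive G 1)
    (hg : ∀ n x, IsNArc G n x → 1 ≤ n → x 0 = x n → 5 ≤ n) (hnt : ¬ IsNArcTransitive G 4)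
    {x : ℕ → V} (hx : IsNArc G 3 x) (hR : ¬ ArcRel G 2 (x 0) (x 3)) :
    ∃ S : Set V, S.encard ≤ 4 ∧ IsDistinguishing G S := by
  have hU := fun a b u v h1 h2 h => ArcRel.unique (G := G) hg (a := a) (b := b) (u := u) (v := v) h1 h2 h
  have r03 := hx.sub (i := 0) (j := 3) (by omega) (by omega)
  have r13 := hx.sub (i := 1) (j := 3) (by omega) (by omega)
  have n03 : ¬ G.Adj (x 0) (x 3) := fun h => by
    have := hU _ _ _ _ r03 (ArcRel.of_adj h) (by omega); omega
  have n13 : ¬ G.Adj (x 1) (x 3) := fun h => by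
    have := hU _ _ _ _ r13 (ArcRel.of_adj h) (by omega); omega
  refine ⟨{x 0, x 1, x 3}, ?_, fun φ hφ => ?_⟩
  · refine (Set.encard_insert_le _ _).trans ?_
    refine (add_le_add_left (encard_pair_le_two _ _) _).trans ?_
    norm_num
  have hmem : ∀ v ∈ ({x 0, x 1, x 3} : Set V), φ v ∈ ({x 0, x 1, x 3} : Set V) := by
    intro v hv
    have := Set.mem_image_of_mem φ hv
    rwa [hφ] at this
  have m0 := hmem (x 0) (by simp)
  have m1 := hmem (x 1) (by simp)
  have m3 := hmem (x 3) (by simp)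
  simp only [Set.mem_insert_iff, Set.mem_singleton_iff] at m0 m1 m3
  have a01 := hx.1 0 (by omega)
  simp only [zero_add] at a01
  have b01 : G.Adj (φ (x 0)) (φ (x 1)) := φ.map_rel_iff.2 a01
  have inj : ∀ u v, φ u = φ v → u = v := fun u v h => φ.injective h
  have d03 : x 0 ≠ x 3 := fun h => n13 (by rw [← h]; exact a01.symm)
  have d13 : x 1 ≠ x 3 := hx.2 1 (by omega)
  have d01 := a01.ne
  have hp : (φ (x 0) = x 0 ∧ φ (x 1) = x 1) ∨ (φ (x 0) = x 1 ∧ φ (x 1) = x 0) := by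
    have hirr := fun v => G.irrefl (v := v)
    have n03' := fun h => n03 (SimpleGraph.Adj.symm h)
    have n13' := fun h => n13 (SimpleGraph.Adj.symm h)
    have i0 := hirr (x 0)
    have i1 := hirr (x 1)
    have i3 := hirr (x 3)
    rcases m1 with h1 | h1 | h1 <;> rcases m0 with h0 | h0 | h0 <;>
      rw [h0, h1] at b01 <;>
      first | contradiction | exact Or.inl ⟨h0, h1⟩ | exact Or.inr ⟨h0, h1⟩
  have hf3 : φ (x 3) = x 3 := by
    have i0 := inj (x 0) (x 3)
    have i1 := inj (x 1) (x 3)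
    rcases m3 with h | h | h <;> grind
  have hf : φ (x 0) = x 0 ∧ φ (x 1) = x 1 := by
    rcases hp with h | ⟨h0, h1⟩
    · exact h
    · exfalso
      have := r13.map φ
      rw [h1, hf3] at this
      exact hR this
  have f2 := arc_fixed hg hx (i := 1) (j := 3) (by omega) (by omega) (by omega) φ hf.2 hf3
  refine rigid hconn hcubic hat hnt φ hx (fun i hi => ?_)
  rcases Nat.lt_or_ge 0 i with h | h
  · exact f2 i h hi
  · obtain rfl : i = 0 := by omega
    exact hf.1
end Cubic

section Small
variable {V : Type*} {G : SimpleGraph V}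

theorem iso_of_list {W : Type*} {H : SimpleGraph W} [DecidableRel H.Adj] {n : ℕ} [NeZero n]
    (hconn : G.Connected) (hcubic : ∀ v : V, (G.neighborSet v).ncard = 3)
    (e : Fin n → W) (he : Function.Injective e) (hsurj : ∀ w, ∃ i, e i = w)
    (hdeg : ∀ i, (Finset.univ.filter (fun j => H.Adj (e i) (e j))).card = 3)
    (E : List (Fin n × Fin n)) (hE : ∀ i j, i < j → H.Adj (e i) (e j) → (i, j) ∈ E)
    (x : Fin n → V) (hx : (List.ofFn x).Nodup) (hadj : ∀ p ∈ E, G.Adj (x p.1) (x p.2)) :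
    Nonempty (G ≃g H) := by
  have hbij : Function.Bijective e := ⟨he, hsurj⟩
  set eq := Equiv.ofBijective e hbij with heq
  have heq' : ∀ i, eq i = e i := fun i => rfl
  have : Nonempty W := ⟨e 0⟩
  refine iso_of_inj hconn hcubic (fun w => ?_) (fun w => x (eq.symm w))
    ((List.nodup_ofFn.1 hx).comp eq.symm.injective) ?_
  · obtain ⟨i, rfl⟩ := hsurj w
    have : H.neighborSet (e i) =
        e '' (↑(Finset.univ.filter (fun j => H.Adj (e i) (e j))) : Set (Fin n)) := by
      ext w
      obtain ⟨j, rfl⟩ := hsurj w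
      simp only [mem_neighborSet, Set.mem_image, Finset.coe_filter, Finset.mem_univ, true_and]
      constructor
      · intro h; exact ⟨j, h, rfl⟩
      · rintro ⟨k, h, hk⟩; rw [← hk]; exact h
    rw [this, Set.ncard_image_of_injective _ he, Set.ncard_coe_finset, hdeg]
  · intro a b hab
    obtain ⟨i, rfl⟩ := hsurj a
    obtain ⟨j, rfl⟩ := hsurj b
    have h1 : eq.symm (e i) = i := by rw [← heq', Equiv.symm_apply_apply]
    have h2 : eq.symm (e j) = j := by rw [← heq', Equiv.symm_apply_apply]
    simp only [h1, h2]
    rcases lt_trichotomy i j with h | h | h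
    · exact hadj _ (hE i j h hab)
    · subst h; exact absurd hab H.irrefl
    · exact (hadj _ (hE j i h hab.symm)).symm

def seqOf (a b c d e f : V) : ℕ → V
  | 0 => a
  | 1 => b
  | 2 => c
  | 3 => d
  | 4 => e
  | _ => f

theorem no_tri {g : ℕ} (h4 : 4 ≤ g) (hg : ∀ n x, IsNArc G n x → 1 ≤ n → x 0 = x n → g ≤ n)
    {a b c : V} (h1 : G.Adj a b) (h2 : G.Adj b c) (h3 : G.Adj c a) : False := by
  have := hg 3 (seqOf a b c a a a) ⟨fun i hi => by interval_cases i <;> simpa [seqOf],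
    fun i hi => by
      have : i < 2 := by omega
      interval_cases i
      · exact h3.ne'
      · exact h1.ne'⟩ (by omega) rfl
  omega

theorem quad {g : ℕ} (h5 : 5 ≤ g) (hg : ∀ n x, IsNArc G n x → 1 ≤ n → x 0 = x n → g ≤ n)
    {a b c d : V} (h1 : G.Adj a b) (h2 : G.Adj b c) (h3 : G.Adj c d) (h4 : G.Adj d a)
    (hac : a ≠ c) : b = d := by
  by_contra hbd
  have := hg 4 (seqOf a b c d a a) ⟨fun i hi => by interval_cases i <;> simpa [seqOf],
    fun i hi => by
      have : i < 3 := by omega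
      interval_cases i
      · exact hac
      · exact hbd
      · exact hac.symm⟩ (by omega) rfl
  omega

theorem no_pent {g : ℕ} (h6 : 6 ≤ g) (hg : ∀ n x, IsNArc G n x → 1 ≤ n → x 0 = x n → g ≤ n)
    {a b c d e : V} (h1 : G.Adj a b) (h2 : G.Adj b c) (h3 : G.Adj c d) (h4 : G.Adj d e)
    (h5 : G.Adj e a) : False := by
  have tri : ∀ {a b c : V}, G.Adj a b → G.Adj b c → G.Adj c a → False :=
    fun h1 h2 h3 => no_tri (by omega) hg h1 h2 h3
  have n1 : a ≠ c := by rintro rfl; exact tri h3 h4 h5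
  have n2 : b ≠ d := by rintro rfl; exact tri h1 h4 h5
  have n3 : c ≠ e := by rintro rfl; exact tri h1 h2 h5
  have n4 : d ≠ a := by rintro rfl; exact tri h1 h2 h3
  have := hg 5 (seqOf a b c d e a) ⟨fun i hi => by interval_cases i <;> simpa [seqOf],
    fun i hi => by
      have : i < 4 := by omega
      interval_cases i
      · exact n1
      · exact n2
      · exact n3
      · exact n4⟩ (by omega) rfl
  omega

theorem iso_K4 (hconn : G.Connected) (hcubic : ∀ v : V, (G.neighborSet v).ncard = 3)
    (hat : IsNArcTransitive G 1) {c : ℕ → V} (hc : IsNArc G 3 c) (hc0 : c 0 = c 3) :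
    Nonempty (G ≃g (⊤ : SimpleGraph (Fin 4))) := by
  have a1 := hc.1 0 (by omega)
  have a2 := hc.1 1 (by omega)
  have a3 := hc.1 2 (by omega)
  simp only [zero_add, Nat.reduceAdd, ← hc0] at a1 a2 a3
  have h := pair_transfer hcubic hat (fun _ a b => G.Adj a b)
    (fun φ _ a b h => φ.map_rel_iff.2 h) (fun _ a b h => h.symm) a1 a3.symm a2.ne a2
  obtain ⟨x, y, z, h1, h2, h3, hx, hy, hz, -⟩ := nbrs_all hcubic (c 0)
  have e1 := h _ _ _ hx hy h1
  have e2 := h _ _ _ hx hz h2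
  have e3 := h _ _ _ hy hz h3
  refine iso_of_list hconn hcubic (fun i : Fin 4 => i) (by decide) (by decide) (by decide)
    [(0, 1), (0, 2), (0, 3), (1, 2), (1, 3), (2, 3)] (by decide) ![c 0, x, y, z] ?_ ?_
  · simp [hx.ne, hy.ne, hz.ne, h1, h2, h3]
  · simp [hx, hy, hz, e1, e2, e3]

instance : DecidableRel (completeBipartiteGraph (Fin 3) (Fin 3)).Adj := fun x y =>
  decidable_of_iff ((x.isLeft ∧ y.isRight) ∨ (x.isRight ∧ y.isLeft)) (by simp)

instance : DecidableRel cubeGraph.Adj := fun x y =>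
  decidable_of_iff (x ≠ y ∧ ((Finset.univ.filter fun i => x i ≠ y i).card = 1 ∨
    (Finset.univ.filter fun i => y i ≠ x i).card = 1)) (by simp [cubeGraph])

instance : DecidableRel petersenGraph.Adj := fun a b =>
  decidable_of_iff (a ≠ b ∧ (Disjoint a.1 b.1 ∨ Disjoint b.1 a.1)) (by simp [petersenGraph])

instance : DecidableRel heawoodGraph.Adj := fun p l =>
  decidable_of_iff (p ≠ l ∧ ((p.1 = false ∧ l.1 = true ∧ ∑ i, p.2.1 i * l.2.1 i = 0) ∨
    (l.1 = false ∧ p.1 = true ∧ ∑ i, l.2.1 i * p.2.1 i = 0))) (by simp [heawoodGraph])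

theorem iso_girth_four (hconn : G.Connected) (hcubic : ∀ v : V, (G.neighborSet v).ncard = 3)
    (hat : IsNArcTransitive G 1) {c : ℕ → V} (hc : IsNArc G 4 c) (hc0 : c 0 = c 4)
    (hg : ∀ n x, IsNArc G n x → 1 ≤ n → x 0 = x n → 4 ≤ n) :
    Nonempty (G ≃g completeBipartiteGraph (Fin 3) (Fin 3)) ∨ Nonempty (G ≃g cubeGraph) := by
  have tri : ∀ {a b c : V}, G.Adj a b → G.Adj b c → G.Adj c a → False :=
    fun h1 h2 h3 => no_tri (by omega) hg h1 h2 h3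
  have a1 := hc.1 0 (by omega)
  have a2 := hc.1 1 (by omega)
  have a3 := hc.1 2 (by omega)
  have a4 := hc.1 3 (by omega)
  have d1 := hc.2 0 (by omega)
  have d2 := hc.2 1 (by omega)
  simp only [zero_add, Nat.reduceAdd, ← hc0] at a1 a2 a3 a4 d1 d2
  have hP := pair_transfer hcubic hat (fun v a b => ∃ w, w ≠ v ∧ G.Adj a w ∧ G.Adj b w)
    (by
      rintro φ v a b ⟨w, h1, h2, h3⟩
      exact ⟨φ w, fun h => h1 (φ.injective h), φ.map_rel_iff.2 h2, φ.map_rel_iff.2 h3⟩)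
    (by rintro v a b ⟨w, h1, h2, h3⟩; exact ⟨w, h1, h3, h2⟩)
    a1 a4.symm d2 ⟨c 2, d1.symm, a2, a3.symm⟩
  by_cases hQ : ∃ v a b, G.Adj v a ∧ G.Adj v b ∧ a ≠ b ∧ ∀ w, G.Adj a w ↔ G.Adj b w
  · left
    obtain ⟨v, a, b, ha, hb, hab, hall⟩ := hQ
    have hQ' := pair_transfer hcubic hat (fun v a b => ∀ w, G.Adj a w ↔ G.Adj b w)
      (by
        intro φ v a b h w
        obtain ⟨w, rfl⟩ := φ.surjective w
        rw [φ.map_rel_iff, φ.map_rel_iff]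
        exact h w)
      (fun v a b h w => (h w).symm) ha hb hab hall
    obtain ⟨c, hac, hbc, hc, -⟩ := nbrs_two hcubic ha hb hab
    obtain ⟨x, y, h1, h2, h3, hx, hy, -⟩ := nbrs_one hcubic ha.symm
    have hc' := hQ' v a c ha hc hac
    have hbx := (hall x).1 hx
    have hby := (hall y).1 hy
    have hcx := (hc' x).1 hx
    have hcy := (hc' y).1 hy
    refine iso_of_list hconn hcubic
      (![Sum.inl 0, Sum.inl 1, Sum.inl 2, Sum.inr 0, Sum.inr 1, Sum.inr 2] :
        Fin 6 → Fin 3 ⊕ Fin 3) (by decide) (by decide) (by decide)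
      [(0, 3), (0, 4), (0, 5), (1, 3), (1, 4), (1, 5), (2, 3), (2, 4), (2, 5)] (by decide)
      ![a, b, c, v, x, y] ?_ ?_
    · simp [hab, hac, hbc, h1, h2, h3, ha.ne', hb.ne', hc.ne', hx.ne, hy.ne, hbx.ne, hby.ne,
        hcx.ne, hcy.ne]
    · simp [ha.symm, hb.symm, hc.symm, hx, hy, hbx, hby, hcx, hcy]
  · right
    -- two vertices with three common neighbours are impossible
    have hno : ∀ {u w a b c : V}, G.Adj u a → G.Adj u b → G.Adj u c → G.Adj w a → G.Adj w b →
        G.Adj w c → a ≠ b → a ≠ c → b ≠ c → u ≠ w → False := by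
      intro u w a b c h1 h2 h3 h4 h5 h6 hab hac hbc huw
      apply hQ
      refine ⟨a, u, w, h1.symm, h4.symm, huw, fun t => ?_⟩
      obtain ⟨x, hx1, hx2, hx, hxall⟩ := nbrs_two hcubic h1 h2 hab
      obtain ⟨y, hy1, hy2, hy, hyall⟩ := nbrs_two hcubic h4 h5 hab
      have e1 := hxall c h3
      have e2 := hyall c h6
      constructor
      · intro h
        have := hxall t h
        grind
      · intro h
        have := hyall t h
        grind
    obtain ⟨v⟩ : Nonempty V := ⟨c 0⟩
    clear a1 a2 a3 a4 d1 d2 hc hc0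
    obtain ⟨a, b, c, hab, hac, hbc, ha, hb, hc, hvall⟩ := nbrs_all hcubic v
    obtain ⟨p, hpv, hap, hbp⟩ := hP v a b ha hb hab
    obtain ⟨q, hqv, haq, hcq⟩ := hP v a c ha hc hac
    obtain ⟨r, hrv, hbr, hcr⟩ := hP v b c hb hc hbc
    have ncp : ¬ G.Adj c p := fun h => hno ha hb hc hap.symm hbp.symm h.symm hab hac hbc hpv.symm
    have nbq : ¬ G.Adj b q := fun h => hno ha hb hc haq.symm h.symm hcq.symm hab hac hbc hqv.symm
    have nar : ¬ G.Adj a r := fun h => hno ha hb hc h.symm hbr.symm hcr.symm hab hac hbc hrv.symm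
    have hpq : p ≠ q := fun h => ncp (h ▸ hcq)
    have hpr : p ≠ r := fun h => nar (h ▸ hap)
    have hqr : q ≠ r := fun h => nar (h ▸ haq)
    obtain ⟨u, hua, hpu, hqu⟩ := hP a p q hap haq hpq
    have hub : u ≠ b := fun h => nbq (h ▸ hqu.symm)
    obtain ⟨p', hp1, hp2, hp3, hpall⟩ := nbrs_two hcubic hap.symm hbp.symm hab
    have hru : G.Adj r u := by
      obtain ⟨t, htb, hpt, hrt⟩ := hP b p r hbp hbr hpr
      have hta : t ≠ a := fun h => nar (h ▸ hrt.symm)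
      have e1 := hpall t hpt
      have e2 := hpall u hpu
      have : t = u := by grind
      rwa [← this]
    have huc : u ≠ c := fun h => ncp (h ▸ hpu.symm)
    have nvp : v ≠ u := by
      rintro rfl
      exact tri ha hap hpu
    have e1 : p ≠ c := by rintro rfl; exact tri ha hap hc.symm
    have e2 : q ≠ b := by rintro rfl; exact tri ha haq hb.symm
    have e3 : r ≠ a := by rintro rfl; exact tri hb hbr ha.symm
    refine iso_of_list hconn hcubic
      (![![false, false, false], ![true, false, false], ![false, true, false], ![false, false, true],
        ![true, true, false], ![true, false, true], ![false, true, true], ![true, true, true]] :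
        Fin 8 → Fin 3 → Bool) (by decide) (by decide) (by decide)
      [(0, 1), (0, 2), (0, 3), (1, 4), (1, 5), (2, 4), (2, 6), (3, 5), (3, 6), (4, 7), (5, 7),
        (6, 7)] (by decide)
      ![v, a, b, c, p, q, r, u] ?_ ?_
    · simp [ha.ne, hb.ne, hc.ne, hab, hac, hbc, hpv.symm, hqv.symm, hrv.symm, hap.ne, hbp.ne,
        haq.ne, hcq.ne, hbr.ne, hcr.ne, hpq, hpr, hqr, hua.symm, hub.symm, huc.symm, hpu.ne,
        hqu.ne, hru.ne, nvp, e1.symm, e2.symm, e3.symm]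
    · simp [ha, hb, hc, hap, haq, hbp, hbr, hcq, hcr, hpu, hqu, hru]

theorem iso_petersen (hconn : G.Connected) (hcubic : ∀ v : V, (G.neighborSet v).ncard = 3)
    (hg : ∀ n x, IsNArc G n x → 1 ≤ n → x 0 = x n → 5 ≤ n)
    (hall : ∀ x, IsNArc G 3 x → ArcRel G 2 (x 0) (x 3)) : Nonempty (G ≃g petersenGraph) := by
  have tri : ∀ {a b c : V}, G.Adj a b → G.Adj b c → G.Adj c a → False :=
    fun h1 h2 h3 => no_tri (by omega) hg h1 h2 h3
  have quad : ∀ {a b c d : V}, G.Adj a b → G.Adj b c → G.Adj c d → G.Adj d a → a ≠ c → b = d :=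
    fun h1 h2 h3 h4 h => quad (by omega) hg h1 h2 h3 h4 h
  have cl : ∀ {a b c d : V}, G.Adj a b → G.Adj b c → G.Adj c d → a ≠ c → b ≠ d →
      ∃ w, G.Adj a w ∧ G.Adj w d := by
    intro a b c d h1 h2 h3 hac hbd
    have := hall (seqOf a b c d d d) ⟨fun i hi => by interval_cases i <;> simpa [seqOf],
      fun i hi => by
        have : i < 2 := by omega
        interval_cases i
        · exact hac
        · exact hbd⟩
    exact (arcRel_two.1 this).2
  obtain ⟨v⟩ := hconn.nonempty
  obtain ⟨a0, a1, a2, n01, n02, n12, h0, h1, h2, -⟩ := nbrs_all hcubic v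
  -- a vertex below one neighbour of `v` is joined to some vertex below each other one
  have low : ∀ {a a' b c d : V}, G.Adj v a → G.Adj v a' → a ≠ a' → G.Adj a b → v ≠ b →
      (∀ w, G.Adj a' w → w = v ∨ w = c ∨ w = d) → G.Adj b c ∨ G.Adj b d := by
    intro a a' b c d ha ha' hne hb hvb hN
    obtain ⟨w, hw1, hw2⟩ := cl hb.symm ha.symm ha' hvb.symm hne
    rcases hN w hw2.symm with rfl | rfl | rfl
    · exact (tri ha hb hw1).elim
    · exact Or.inl hw1
    · exact Or.inr hw1
  obtain ⟨b00, b01, m1, m2, m3, e00, e01, all0⟩ := nbrs_one hcubic h0.symm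
  have hB1 : ∃ b10 b11, v ≠ b10 ∧ v ≠ b11 ∧ b10 ≠ b11 ∧ G.Adj a1 b10 ∧ G.Adj a1 b11 ∧
      (∀ w, G.Adj a1 w → w = v ∨ w = b10 ∨ w = b11) ∧ G.Adj b00 b10 := by
    obtain ⟨c, d, k1, k2, k3, f1, f2, al⟩ := nbrs_one hcubic h1.symm
    rcases low h0 h1 n01 e00 m1 al with h | h
    · exact ⟨c, d, k1, k2, k3, f1, f2, al, h⟩
    · exact ⟨d, c, k2, k1, k3.symm, f2, f1, fun w hw => by have := al w hw; tauto, h⟩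
  have hB2 : ∃ b20 b21, v ≠ b20 ∧ v ≠ b21 ∧ b20 ≠ b21 ∧ G.Adj a2 b20 ∧ G.Adj a2 b21 ∧
      (∀ w, G.Adj a2 w → w = v ∨ w = b20 ∨ w = b21) ∧ G.Adj b00 b20 := by
    obtain ⟨c, d, k1, k2, k3, f1, f2, al⟩ := nbrs_one hcubic h2.symm
    rcases low h0 h2 n02 e00 m1 al with h | h
    · exact ⟨c, d, k1, k2, k3, f1, f2, al, h⟩
    · exact ⟨d, c, k2, k1, k3.symm, f2, f1, fun w hw => by have := al w hw; tauto, h⟩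
  obtain ⟨b10, b11, p1, p2, p3, e10, e11, all1, g1⟩ := hB1
  obtain ⟨b20, b21, q1, q2, q3, e20, e21, all2, g2⟩ := hB2
  have g3 : G.Adj b01 b11 := by
    rcases low h0 h1 n01 e01 m2 all1 with h | h
    · exfalso
      have := quad e00 g1 h.symm e01.symm (by rintro rfl; exact tri h0 e10.symm h1.symm)
      exact m3 this
    · exact h
  have g4 : G.Adj b01 b21 := by
    rcases low h0 h2 n02 e01 m2 all2 with h | h
    · exfalso
      have := quad e00 g2 h.symm e01.symm (by rintro rfl; exact tri h0 e20.symm h2.symm)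
      exact m3 this
    · exact h
  have g5 : G.Adj b10 b21 := by
    rcases low h1 h2 n12 e10 p1 all2 with h | h
    · exact (tri g1 h g2.symm).elim
    · exact h
  have g6 : G.Adj b11 b20 := by
    rcases low h1 h2 n12 e11 p2 all2 with h | h
    · exact h
    · exact (tri g3 h g4.symm).elim
  -- distinctness
  have dab : ∀ {a a' b : V}, G.Adj v a → G.Adj v a' → G.Adj a' b → a ≠ b := by
    rintro a a' b h h' hb rfl
    exact tri h hb.symm h'.symm
  have dbb : ∀ {a a' b b' : V}, G.Adj v a → G.Adj v a' → a ≠ a' → G.Adj a b → G.Adj a' b' →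
      v ≠ b → b ≠ b' := by
    rintro a a' b b' h h' hne hb hb' hvb rfl
    exact hne (quad h hb hb'.symm h'.symm hvb)
  refine iso_of_list hconn hcubic
    (![⟨{0, 1}, by decide⟩, ⟨{2, 3}, by decide⟩, ⟨{2, 4}, by decide⟩, ⟨{3, 4}, by decide⟩,
      ⟨{0, 4}, by decide⟩, ⟨{1, 4}, by decide⟩, ⟨{1, 3}, by decide⟩, ⟨{0, 3}, by decide⟩,
      ⟨{1, 2}, by decide⟩, ⟨{0, 2}, by decide⟩] :
      Fin 10 → {s : Finset (Fin 5) // s.card = 2}) (by decide) (by decide) (by decide)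
    [(0, 1), (0, 2), (0, 3), (1, 4), (1, 5), (2, 6), (2, 7), (3, 8), (3, 9), (4, 6), (4, 8),
      (5, 7), (5, 9), (6, 9), (7, 8)] (by decide)
    ![v, a0, a1, a2, b00, b01, b10, b11, b20, b21] ?_ ?_
  · simp [h0.ne, h1.ne, h2.ne, n01, n02, n12, m1, m2, m3, p1, p2, p3, q1, q2, q3,
      dab h0 h0 e00, dab h0 h0 e01, dab h0 h1 e10, dab h0 h1 e11, dab h0 h2 e20, dab h0 h2 e21,
      dab h1 h0 e00, dab h1 h0 e01, dab h1 h1 e10, dab h1 h1 e11, dab h1 h2 e20, dab h1 h2 e21,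
      dab h2 h0 e00, dab h2 h0 e01, dab h2 h1 e10, dab h2 h1 e11, dab h2 h2 e20, dab h2 h2 e21,
      dbb h0 h1 n01 e00 e10 m1, dbb h0 h1 n01 e00 e11 m1, dbb h0 h1 n01 e01 e10 m2,
      dbb h0 h1 n01 e01 e11 m2, dbb h0 h2 n02 e00 e20 m1, dbb h0 h2 n02 e00 e21 m1,
      dbb h0 h2 n02 e01 e20 m2, dbb h0 h2 n02 e01 e21 m2, dbb h1 h2 n12 e10 e20 p1,
      dbb h1 h2 n12 e10 e21 p1, dbb h1 h2 n12 e11 e20 p2, dbb h1 h2 n12 e11 e21 p2]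
  · simp [h0, h1, h2, e00, e01, e10, e11, e20, e21, g1, g2, g3, g4, g5, g6]

theorem iso_heawood (hconn : G.Connected) (hcubic : ∀ v : V, (G.neighborSet v).ncard = 3)
    (hg : ∀ n x, IsNArc G n x → 1 ≤ n → x 0 = x n → 6 ≤ n)
    (hall : ∀ x, IsNArc G 4 x → ArcRel G 2 (x 0) (x 4)) : Nonempty (G ≃g heawoodGraph) := by
  have tri : ∀ {a b c : V}, G.Adj a b → G.Adj b c → G.Adj c a → False :=
    fun h1 h2 h3 => no_tri (by omega) hg h1 h2 h3
  have quad : ∀ {a b c d : V}, G.Adj a b → G.Adj b c → G.Adj c d → G.Adj d a → a ≠ c → b = d :=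
    fun h1 h2 h3 h4 h => quad (by omega) hg h1 h2 h3 h4 h
  have pent : ∀ {a b c d e : V}, G.Adj a b → G.Adj b c → G.Adj c d → G.Adj d e → G.Adj e a → False :=
    fun h1 h2 h3 h4 h5 => no_pent (by omega) hg h1 h2 h3 h4 h5
  have cl : ∀ {a b c d e : V}, G.Adj a b → G.Adj b c → G.Adj c d → G.Adj d e → a ≠ c → b ≠ d →
      c ≠ e → ∃ w, G.Adj a w ∧ G.Adj w e := by
    intro a b c d e h1 h2 h3 h4 hac hbd hce
    have := hall (seqOf a b c d e e) ⟨fun i hi => by interval_cases i <;> simpa [seqOf],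
      fun i hi => by
        have : i < 3 := by omega
        interval_cases i
        · exact hac
        · exact hbd
        · exact hce⟩
    exact (arcRel_two.1 this).2
  obtain ⟨v⟩ := hconn.nonempty
  obtain ⟨a0, a1, a2, n01, n02, n12, h0, h1, h2, -⟩ := nbrs_all hcubic v
  have dbb : ∀ {a a' b b' : V}, G.Adj v a → G.Adj v a' → a ≠ a' → G.Adj a b → G.Adj a' b' →
      v ≠ b → b ≠ b' := by
    rintro a a' b b' h h' hne hb hb' hvb rfl
    exact hne (quad h hb hb'.symm h'.symm hvb)
  have dac : ∀ {a a' b c : V}, G.Adj v a → G.Adj v a' → a ≠ a' → G.Adj a' b → v ≠ b →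
      G.Adj b c → a ≠ c := by
    rintro a a' b c h h' hne hb hvb hc rfl
    exact hne (quad h hc.symm hb.symm h'.symm hvb)
  -- vertices below different neighbours of `v` have a common lower neighbour
  have low : ∀ {a a' b b' c d : V}, G.Adj v a → G.Adj v a' → a ≠ a' → G.Adj a b → v ≠ b →
      G.Adj a' b' → v ≠ b' → (∀ w, G.Adj b w → w = a ∨ w = c ∨ w = d) →
      G.Adj b' c ∨ G.Adj b' d := by
    intro a a' b b' c d ha ha' hne hb hvb hb' hvb' hN
    obtain ⟨w, hw1, hw2⟩ := cl hb.symm ha.symm ha' hb' hvb.symm hne hvb'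
    rcases hN w hw1 with rfl | rfl | rfl
    · exact (hne (quad ha hw2 hb'.symm ha'.symm hvb')).elim
    · exact Or.inl hw2.symm
    · exact Or.inr hw2.symm
  obtain ⟨b00, b01, m1, m2, m3, e00, e01, -⟩ := nbrs_one hcubic h0.symm
  obtain ⟨b10, b11, p1, p2, p3, e10, e11, -⟩ := nbrs_one hcubic h1.symm
  have hC : ∃ c0 c1, a0 ≠ c0 ∧ a0 ≠ c1 ∧ c0 ≠ c1 ∧ G.Adj b00 c0 ∧ G.Adj b00 c1 ∧
      (∀ w, G.Adj b00 w → w = a0 ∨ w = c0 ∨ w = c1) ∧ G.Adj b10 c0 := by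
    obtain ⟨c, d, k1, k2, k3, f1, f2, al⟩ := nbrs_one hcubic e00.symm
    rcases low h0 h1 n01 e00 m1 e10 p1 al with h | h
    · exact ⟨c, d, k1, k2, k3, f1, f2, al, h⟩
    · exact ⟨d, c, k2, k1, k3.symm, f2, f1, fun w hw => by have := al w hw; tauto, h⟩
  obtain ⟨c0, c1, r1, r2, r3, s0, s1, allC, t10⟩ := hC
  have hD : ∃ c2 c3, a0 ≠ c2 ∧ a0 ≠ c3 ∧ c2 ≠ c3 ∧ G.Adj b01 c2 ∧ G.Adj b01 c3 ∧
      (∀ w, G.Adj b01 w → w = a0 ∨ w = c2 ∨ w = c3) ∧ G.Adj b10 c2 := by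
    obtain ⟨c, d, k1, k2, k3, f1, f2, al⟩ := nbrs_one hcubic e01.symm
    rcases low h0 h1 n01 e01 m2 e10 p1 al with h | h
    · exact ⟨c, d, k1, k2, k3, f1, f2, al, h⟩
    · exact ⟨d, c, k2, k1, k3.symm, f2, f1, fun w hw => by have := al w hw; tauto, h⟩
  obtain ⟨c2, c3, r4, r5, r6, s2, s3, allD, t12⟩ := hD
  have hB2 : ∃ b20 b21, v ≠ b20 ∧ v ≠ b21 ∧ b20 ≠ b21 ∧ G.Adj a2 b20 ∧ G.Adj a2 b21 ∧
      G.Adj b20 c0 := by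
    obtain ⟨c, d, k1, k2, k3, f1, f2, -⟩ := nbrs_one hcubic h2.symm
    rcases low h0 h2 n02 e00 m1 f1 k1 allC with h | h
    · exact ⟨c, d, k1, k2, k3, f1, f2, h⟩
    · rcases low h0 h2 n02 e00 m1 f2 k2 allC with h' | h'
      · exact ⟨d, c, k2, k1, k3.symm, f2, f1, h'⟩
      · exfalso
        exact k3 (quad f1 h h'.symm f2.symm
          (dac h2 h0 n02.symm e00 m1 s1))
  obtain ⟨b20, b21, q1, q2, q3, e20, e21, t20⟩ := hB2
  have k1 : c0 ≠ c2 := by rintro rfl; exact m3 (quad e00 s0 s2.symm e01.symm r1)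
  have k2 : c0 ≠ c3 := by rintro rfl; exact m3 (quad e00 s0 s3.symm e01.symm r1)
  have k3 : c1 ≠ c2 := by rintro rfl; exact m3 (quad e00 s1 s2.symm e01.symm r2)
  have k4 : c1 ≠ c3 := by rintro rfl; exact m3 (quad e00 s1 s3.symm e01.symm r2)
  have t11 : G.Adj b11 c1 := by
    rcases low h0 h1 n01 e00 m1 e11 p2 allC with h | h
    · exact (p3 (quad e10 t10 h.symm e11.symm (dac h1 h0 n01.symm e00 m1 s0))).elim
    · exact h
  have t13 : G.Adj b11 c3 := by
    rcases low h0 h1 n01 e01 m2 e11 p2 allD with h | h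
    · exact (p3 (quad e10 t12 h.symm e11.symm (dac h1 h0 n01.symm e01 m2 s2))).elim
    · exact h
  have t23 : G.Adj b20 c3 := by
    rcases low h0 h2 n02 e01 m2 e20 q1 allD with h | h
    · exact (k1 (quad t10 t20.symm h t12.symm (dbb h1 h2 n12 e10 e20 p1))).elim
    · exact h
  have t21 : G.Adj b21 c1 := by
    rcases low h0 h2 n02 e00 m1 e21 q2 allC with h | h
    · exact (q3 (quad e20 t20 h.symm e21.symm (dac h2 h0 n02.symm e00 m1 s0))).elim
    · exact h
  have t22 : G.Adj b21 c2 := by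
    rcases low h0 h2 n02 e01 m2 e21 q2 allD with h | h
    · exact h
    · exact (q3 (quad e20 t23 h.symm e21.symm (dac h2 h0 n02.symm e01 m2 s3))).elim
  -- the two colour classes are disjoint
  have bip : ∀ u ∈ [v, b00, b01, b10, b11, b20, b21], ∀ w ∈ [a0, a1, a2, c0, c1, c2, c3],
      u ≠ w := by
    have hev : ∀ u ∈ [v, b00, b01, b10, b11, b20, b21], u = v ∨ ∃ a, G.Adj v a ∧ G.Adj a u := by
      simp only [List.forall_mem_cons]
      exact ⟨Or.inl trivial, Or.inr ⟨_, h0, e00⟩, Or.inr ⟨_, h0, e01⟩, Or.inr ⟨_, h1, e10⟩,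
        Or.inr ⟨_, h1, e11⟩, Or.inr ⟨_, h2, e20⟩, Or.inr ⟨_, h2, e21⟩, by simp⟩
    have hod : ∀ w ∈ [a0, a1, a2, c0, c1, c2, c3],
        G.Adj v w ∨ ∃ a b, G.Adj v a ∧ G.Adj a b ∧ G.Adj b w := by
      simp only [List.forall_mem_cons]
      exact ⟨Or.inl h0, Or.inl h1, Or.inl h2, Or.inr ⟨_, _, h0, e00, s0⟩,
        Or.inr ⟨_, _, h0, e00, s1⟩, Or.inr ⟨_, _, h0, e01, s2⟩, Or.inr ⟨_, _, h0, e01, s3⟩, by simp⟩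
    rintro u hu w hw rfl
    rcases hev u hu with rfl | ⟨a, ha, hau⟩ <;> rcases hod u hw with h | ⟨a', b', h, h', h''⟩
    · exact G.irrefl h
    · exact tri h h' h''
    · exact tri ha hau h.symm
    · exact pent ha hau h''.symm h'.symm h.symm
  have nd1 : [v, b00, b01, b10, b11, b20, b21].Nodup := by
    simp [m1, m2, m3, p1, p2, p3, q1, q2, q3,
      dbb h0 h1 n01 e00 e10 m1, dbb h0 h1 n01 e00 e11 m1, dbb h0 h1 n01 e01 e10 m2,
      dbb h0 h1 n01 e01 e11 m2, dbb h0 h2 n02 e00 e20 m1, dbb h0 h2 n02 e00 e21 m1,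
      dbb h0 h2 n02 e01 e20 m2, dbb h0 h2 n02 e01 e21 m2, dbb h1 h2 n12 e10 e20 p1,
      dbb h1 h2 n12 e10 e21 p1, dbb h1 h2 n12 e11 e20 p2, dbb h1 h2 n12 e11 e21 p2]
  have nd2 : [a0, a1, a2, c0, c1, c2, c3].Nodup := by
    simp [n01, n02, n12, r1, r2, r3, r4, r5, r6, k1, k2, k3, k4,
      dac h1 h0 n01.symm e00 m1 s0, dac h1 h0 n01.symm e00 m1 s1, dac h1 h0 n01.symm e01 m2 s2,
      dac h1 h0 n01.symm e01 m2 s3, dac h2 h0 n02.symm e00 m1 s0, dac h2 h0 n02.symm e00 m1 s1,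
      dac h2 h0 n02.symm e01 m2 s2, dac h2 h0 n02.symm e01 m2 s3]
  have nd := List.nodup_append.2 ⟨nd1, nd2, bip⟩
  refine iso_of_list hconn hcubic
    (![(false, ⟨![0, 0, 1], by decide⟩), (false, ⟨![0, 1, 0], by decide⟩),
      (false, ⟨![0, 1, 1], by decide⟩), (false, ⟨![1, 0, 0], by decide⟩),
      (false, ⟨![1, 0, 1], by decide⟩), (false, ⟨![1, 1, 0], by decide⟩),
      (false, ⟨![1, 1, 1], by decide⟩), (true, ⟨![1, 0, 0], by decide⟩),
      (true, ⟨![0, 1, 0], by decide⟩), (true, ⟨![1, 1, 0], by decide⟩),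
      (true, ⟨![0, 0, 1], by decide⟩), (true, ⟨![1, 0, 1], by decide⟩),
      (true, ⟨![0, 1, 1], by decide⟩), (true, ⟨![1, 1, 1], by decide⟩)] :
      Fin 14 → Bool × {v : Fin 3 → ZMod 2 // v ≠ 0}) (by decide) (by decide) (by decide)
    [(0, 7), (0, 8), (0, 9), (1, 7), (2, 7), (3, 8), (4, 8), (5, 9), (6, 9), (1, 10), (1, 11),
      (2, 12), (2, 13), (3, 10), (3, 12), (4, 11), (4, 13), (5, 10), (5, 13), (6, 11), (6, 12)]
    (by decide)
    ![v, b00, b01, b10, b11, b20, b21, a0, a1, a2, c0, c1, c2, c3] ?_ ?_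
  · exact nd
  · simp only [List.forall_mem_cons]
    exact ⟨h0, h1, h2, e00.symm, e01.symm, e10.symm, e11.symm, e20.symm, e21.symm, s0, s1, s2, s3,
      t10, t12, t11, t13, t20, t23, t21, t22, by simp⟩
end Small

/-- A connected cubic arc-transitive graph of finite girth which is none of `K₄`,
`K_{3,3}`, the cube, the Petersen graph, or the Heawood graph has distinguishing cost
at most 4. -/
theorem cost_le_four_of_cubic_arcTransitive
    {V : Type*} (Γ : SimpleGraph V)
    (hconn : Γ.Connected)
    (hcubic : ∀ v : V, (Γ.neighborSet v).ncard = 3)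
    (hat : IsNArcTransitive Γ 1)
    (hgirth : Γ.egirth ≠ ⊤)
    (hnotK4 : ¬ Nonempty (Γ ≃g (⊤ : SimpleGraph (Fin 4))))
    (hnotK33 : ¬ Nonempty (Γ ≃g completeBipartiteGraph (Fin 3) (Fin 3)))
    (hnotCube : ¬ Nonempty (Γ ≃g cubeGraph))
    (hnotPetersen : ¬ Nonempty (Γ ≃g petersenGraph))
    (hnotHeawood : ¬ Nonempty (Γ ≃g heawoodGraph)) :
    ∃ S : Set V, S.encard ≤ 4 ∧ IsDistinguishing Γ S := by
  obtain ⟨g, c, h3, hc, hc0, hg⟩ := exists_closed_arc hgirth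
  obtain rfl | rfl | h5 : g = 3 ∨ g = 4 ∨ 5 ≤ g := by omega
  · exact (hnotK4 (iso_K4 hconn hcubic hat hc hc0)).elim
  · rcases iso_girth_four hconn hcubic hat hc hc0 hg with h | h
    · exact (hnotK33 h).elim
    · exact (hnotCube h).elim
  have hnt := not_arcTransitive_of_girth hcubic h5 rfl hc hc0 hg
  obtain rfl | rfl | h7 : g = 5 ∨ g = 6 ∨ 7 ≤ g := by omega
  · by_cases hall : ∀ x, IsNArc Γ 3 x → ArcRel Γ 2 (x 0) (x 3)
    · exact (hnotPetersen (iso_petersen hconn hcubic hg hall)).elim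
    · push Not at hall
      obtain ⟨x, hx, hR⟩ := hall
      exact cost_of_girth_five hconn hcubic hat hg hnt hx hR
  · by_cases hall : ∀ x, IsNArc Γ 4 x → ArcRel Γ 2 (x 0) (x 4)
    · exact (hnotHeawood (iso_heawood hconn hcubic hg hall)).elim
    · push Not at hall
      obtain ⟨x, hx, hR⟩ := hall
      exact cost_of_girth_ge_six hconn hcubic hat le_rfl rfl hg hnt hx (Or.inr hR)
  · exact cost_of_girth_ge_six hconn hcubic hat (by omega) rfl hg hnt
      (hc.mono (by omega)) (Or.inl h7)
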